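/- arXiv:2309.17194 — 3 statements merged into one kernel-verified Lean document; each statement's English description precedes it below -/
import Mathlib

section
/- Let E = EuclideanSpace ℝ (Fin n), let S ⊆ E be nonempty, closed and convex, and let proj : E → E satisfy: for every z ∈ E, proj(z) ∈ S and ‖z − proj(z)‖ ≤ ‖z − y‖ for all y ∈ S. Let P : E →L[ℝ] E be self-adjoint with ⟪x, P x⟫ > 0 for all x ≠ 0, let q ∈ E, γ > 0, and define f(x) = ½⟪x, P x⟫ + ⟪q, x⟫. Then a point x* ∈ E satisfies proj(x* − γ·(P x* + q)) = x* if and only if x* ∈ S and f(x*) ≤ f(y) for all y ∈ S. -/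
/-!
Both sides of the equivalence say that `x ∈ S` and that the gradient `g` of the objective at `x`
satisfies the variational inequality `0 ≤ ⟪g, y - x⟫` for all `y ∈ S`. For a minimizer of a convex
objective this is the first-order optimality condition. For the projection of `z = x - γ • g` it is
the obtuse-angle criterion `⟪z - x, y - x⟫ ≤ 0`, because `z - x = -γ • g`. Since nearest points in a
convex set are unique, `x` is a fixed point as soon as it is a nearest point of `z`.
-/

open RealInnerProductSpace

section MetricProjection

/-- `p` is a metric projection (nearest point) of `z` onto `S`. This is a relation rather than a
function because nearest points need neither exist nor be unique. -/
def IsMetricProjection {E : Type*} [NormedAddCommGroup E] (S : Set E) (z p : E) : Prop :=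
  p ∈ S ∧ ∀ y ∈ S, ‖z - p‖ ≤ ‖z - y‖

theorem IsMetricProjection.unique {E : Type*} [NormedAddCommGroup E] [NormedSpace ℝ E]
    [StrictConvexSpace ℝ E] {S : Set E} {z p p' : E} (hp : IsMetricProjection S z p)
    (hp' : IsMetricProjection S z p') (hS : Convex ℝ S) : p = p' := by
  by_contra hne
  have hmid : midpoint ℝ p p' ∈ S := hS.midpoint_mem hp.1 hp'.1
  have hlt : dist (midpoint ℝ p p') z < ‖z - p‖ :=
    openSegment_subset_ball_of_ne (mem_closedBall_iff_norm'.mpr le_rfl)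
      (mem_closedBall_iff_norm'.mpr (hp'.2 p hp.1)) hne (midpoint_mem_openSegment p p')
  exact (hp.2 _ hmid).not_gt (dist_eq_norm' _ z ▸ hlt)

theorem isMetricProjection_iff_inner_le_zero {E : Type*} [NormedAddCommGroup E]
    [InnerProductSpace ℝ E] {S : Set E} {z p : E} (hS : Convex ℝ S) :
    IsMetricProjection S z p ↔ p ∈ S ∧ ∀ y ∈ S, ⟪z - p, y - p⟫ ≤ 0 := by
  refine and_congr_right fun hp => ?_
  rw [← norm_eq_iInf_iff_real_inner_le_zero hS hp]
  have : Nonempty S := ⟨⟨p, hp⟩⟩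
  have hbdd : BddBelow (Set.range fun y : S => ‖z - y‖) :=
    ⟨0, Set.forall_mem_range.mpr fun _ => norm_nonneg _⟩
  exact ⟨fun h => le_antisymm (le_ciInf fun y => h y y.2) (ciInf_le hbdd ⟨p, hp⟩),
    fun h y hy => h.trans_le (ciInf_le hbdd ⟨y, hy⟩)⟩

theorem isMetricProjection_sub_smul_iff {E : Type*} [NormedAddCommGroup E] [InnerProductSpace ℝ E]
    {S : Set E} (hS : Convex ℝ S) {γ : ℝ} (hγ : 0 < γ) {g x : E} :
    IsMetricProjection S (x - γ • g) x ↔ x ∈ S ∧ ∀ y ∈ S, 0 ≤ ⟪g, y - x⟫ := by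
  simp only [isMetricProjection_iff_inner_le_zero hS, sub_sub_cancel_left, inner_neg_left,
    real_inner_smul_left, neg_nonpos, mul_nonneg_iff_of_pos_left hγ]

end MetricProjection

section FirstOrderOptimality

variable {E : Type*} [AddCommGroup E] [Module ℝ E] {S : Set E} {f : E → ℝ} {x y : E}

theorem nonneg_of_isMinOn_of_hasLineDerivWithinAt {f' : ℝ} (hmin : IsMinOn f S x)
    (hS : StarConvex ℝ x S) (hy : y ∈ S) (hf' : HasLineDerivWithinAt ℝ f f' S x (y - x)) :
    0 ≤ f' := by
  have hsub : Set.Icc (0 : ℝ) 1 ⊆ (fun t : ℝ => x + t • (y - x)) ⁻¹' S :=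
    fun t ht => hS.add_smul_sub_mem hy ht.1 ht.2
  have hmin' : IsMinOn (fun t : ℝ => f (x + t • (y - x))) (Set.Icc 0 1) 0 := fun t ht => by
    simpa using hmin (hsub ht)
  have hcone : (1 : ℝ) ∈ posTangentConeAt (Set.Icc 0 1) (0 : ℝ) :=
    mem_posTangentConeAt_of_segment_subset (by simp [segment_eq_Icc])
  simpa using hmin'.localize.hasFDerivWithinAt_nonneg
    (HasDerivWithinAt.mono hf' hsub).hasFDerivWithinAt hcone

theorem le_sub_of_convexOn_of_hasLineDerivWithinAt {f' : ℝ} (hf : ConvexOn ℝ S f) (hx : x ∈ S)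
    (hy : y ∈ S) (hf' : HasLineDerivWithinAt ℝ f f' S x (y - x)) : f' ≤ f y - f x := by
  have hlineMap : ⇑(AffineMap.lineMap (k := ℝ) x y) = fun t => x + t • (y - x) :=
    funext fun t => by rw [AffineMap.lineMap_apply_module', add_comm]
  have hline : ConvexOn ℝ ((fun t : ℝ => x + t • (y - x)) ⁻¹' S) fun t => f (x + t • (y - x)) := by
    simpa only [hlineMap, Function.comp_def] using hf.comp_affineMap (AffineMap.lineMap x y)
  simpa [slope_def_field] using
    hline.le_slope_of_hasDerivWithinAt (by simpa) (by simpa) zero_lt_one hf'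

theorem isMinOn_iff_forall_nonneg_of_hasLineDerivWithinAt {f' : E → ℝ} (hf : ConvexOn ℝ S f)
    (hx : x ∈ S) (hf' : ∀ y ∈ S, HasLineDerivWithinAt ℝ f (f' (y - x)) S x (y - x)) :
    IsMinOn f S x ↔ ∀ y ∈ S, 0 ≤ f' (y - x) :=
  ⟨fun hmin y hy =>
    nonneg_of_isMinOn_of_hasLineDerivWithinAt hmin (hf.1.starConvex hx) hy (hf' y hy),
  fun h y hy => sub_nonneg.mp <|
    (h y hy).trans (le_sub_of_convexOn_of_hasLineDerivWithinAt hf hx hy (hf' y hy))⟩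

end FirstOrderOptimality

theorem convexOn_bilinForm_self {E : Type*} [AddCommGroup E] [Module ℝ E] {S : Set E}
    (hS : Convex ℝ S) {B : LinearMap.BilinForm ℝ E} (hB : B.IsNonneg) :
    ConvexOn ℝ S fun x => B x x := by
  refine ⟨hS, fun x _ y _ a b ha hb hab => ?_⟩
  have hgap : a * B x x + b * B y y - B (a • x + b • y) (a • x + b • y) =
      a * b * B (x - y) (x - y) := by
    obtain rfl : b = 1 - a := by linarith
    simp only [map_add, map_sub, map_smul, LinearMap.add_apply, LinearMap.sub_apply,
      LinearMap.smul_apply, smul_eq_mul]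
    ring
  exact sub_nonneg.mp (hgap ▸ mul_nonneg (mul_nonneg ha hb) (hB.nonneg _))

section InnerProductSpace

variable {E : Type*} [NormedAddCommGroup E] [InnerProductSpace ℝ E]

/-- The objective `½ xᵀPx + qᵀx` of a quadratic program, with the matrix `P` replaced by a linear
operator on a real inner product space. -/
noncomputable def quadraticObjective (P : E →ₗ[ℝ] E) (q x : E) : ℝ :=
  (1 / 2) * ⟪x, P x⟫ + ⟪q, x⟫

theorem convexOn_quadraticObjective {S : Set E} (hS : Convex ℝ S) {P : E →ₗ[ℝ] E}
    (hP : ∀ x, 0 ≤ ⟪x, P x⟫) (q : E) : ConvexOn ℝ S (quadraticObjective P q) := by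
  have hquad : ConvexOn ℝ S fun x => ⟪x, P x⟫ :=
    convexOn_bilinForm_self hS (B := (innerₗ E).compl₂ P) ⟨hP⟩
  exact (hquad.smul one_half_pos.le).add ((innerₗ E q).convexOn hS)

theorem quadraticObjective_add_smul {P : E →ₗ[ℝ] E} (hP : P.IsSymmetric) (q x v : E) (t : ℝ) :
    quadraticObjective P q (x + t • v) =
      quadraticObjective P q x + t * ⟪P x + q, v⟫ + t ^ 2 * ((1 / 2) * ⟪v, P v⟫) := by
  have hcross : ⟪v, P x⟫ = ⟪P x, v⟫ := real_inner_comm _ _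
  simp only [quadraticObjective, map_add, map_smul, inner_add_left, inner_add_right,
    real_inner_smul_left, real_inner_smul_right, hcross, ← hP x v]
  ring

theorem hasLineDerivAt_quadraticObjective {P : E →ₗ[ℝ] E} (hP : P.IsSymmetric) (q x v : E) :
    HasLineDerivAt ℝ (quadraticObjective P q) ⟪P x + q, v⟫ x v := by
  simp only [HasLineDerivAt, quadraticObjective_add_smul hP]
  have hlin := (hasDerivAt_id' (0 : ℝ)).mul_const ⟪P x + q, v⟫
  have hquad := (hasDerivAt_pow 2 (0 : ℝ)).mul_const ((1 / 2) * ⟪v, P v⟫)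
  simpa using (hlin.const_add (quadraticObjective P q x)).fun_add hquad

theorem pgd_fixed_point_iff_minimizer_general {S : Set E} {f : E → ℝ} (hf : ConvexOn ℝ S f)
    {g x p : E} (hg : ∀ y ∈ S, HasLineDerivWithinAt ℝ f ⟪g, y - x⟫ S x (y - x)) {γ : ℝ}
    (hγ : 0 < γ) (hp : IsMetricProjection S (x - γ • g) p) :
    p = x ↔ x ∈ S ∧ IsMinOn f S x :=
  calc
    p = x ↔ IsMetricProjection S (x - γ • g) x := ⟨fun h => h ▸ hp, fun hx => hp.unique hx hf.1⟩
    _ ↔ x ∈ S ∧ ∀ y ∈ S, 0 ≤ ⟪g, y - x⟫ := isMetricProjection_sub_smul_iff hf.1 hγ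
    _ ↔ x ∈ S ∧ IsMinOn f S x := and_congr_right fun hx =>
      (isMinOn_iff_forall_nonneg_of_hasLineDerivWithinAt (f' := fun v => ⟪g, v⟫) hf hx hg).symm

end InnerProductSpace

theorem pgd_fixed_point_iff_minimizer (n : ℕ)
    (S : Set (EuclideanSpace ℝ (Fin n))) (hne : S.Nonempty)
    (hclosed : IsClosed S) (hconv : Convex ℝ S)
    (proj : EuclideanSpace ℝ (Fin n) → EuclideanSpace ℝ (Fin n))
    (hproj : ∀ z : EuclideanSpace ℝ (Fin n),
      proj z ∈ S ∧ ∀ y ∈ S, ‖z - proj z‖ ≤ ‖z - y‖)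
    (P : EuclideanSpace ℝ (Fin n) →L[ℝ] EuclideanSpace ℝ (Fin n))
    (hsym : ∀ x y : EuclideanSpace ℝ (Fin n), ⟪P x, y⟫ = ⟪x, P y⟫)
    (hpos : ∀ x : EuclideanSpace ℝ (Fin n), x ≠ 0 → 0 < ⟪x, P x⟫)
    (q : EuclideanSpace ℝ (Fin n)) (γ : ℝ) (hγ : 0 < γ) :
    let f : EuclideanSpace ℝ (Fin n) → ℝ := fun x => (1 / 2) * ⟪x, P x⟫ + ⟪q, x⟫
    ∀ xstar : EuclideanSpace ℝ (Fin n),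
      proj (xstar - γ • (P xstar + q)) = xstar ↔
        xstar ∈ S ∧ ∀ y ∈ S, f xstar ≤ f y := by
  intro _ xstar
  have hnonneg (x) : 0 ≤ ⟪x, P x⟫ := by
    obtain rfl | hx := eq_or_ne x 0
    exacts [by simp, (hpos x hx).le]
  exact pgd_fixed_point_iff_minimizer_general
    (convexOn_quadraticObjective hconv (P := P.toLinearMap) hnonneg q)
    (fun y _ => (hasLineDerivAt_quadraticObjective hsym q xstar (y - xstar)).hasLineDerivWithinAt S)
    hγ (hproj _)
end

section
/- Let λ > 0, let g : ℝ → ℝ be convex on ℝ, and let f : ℝ → ℝ be a proximal operator of (λ+1)g, i.e., for every x ∈ ℝ and every y ∈ ℝ, (λ+1)·g(f(x)) + (f(x) − x)²/2 ≤ (λ+1)·g(y) + (y − x)²/2. Define the Moreau envelope M : ℝ → ℝ by M(y) = ⨅_{v ∈ ℝ} ( g(v) + (v − y)²/(2λ) ). Then the Leaky version of f, namely the map x ↦ (f(x) + λ·x)/(λ+1), is a proximal operator of M: for every x ∈ ℝ and every y ∈ ℝ, with p = (f(x) + λ·x)/(λ+1), M(p) + (p − x)²/2 ≤ M(y) + (y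 − x)²/2. -/
/-!
Minimizing `‖v - y‖ ^ 2 / (2 * s) + ‖y - x‖ ^ 2 / (2 * t)` over the intermediate point `y` gives
`‖v - x‖ ^ 2 / (2 * (s + t))`, attained where `y` divides the segment from `v` to `x` in the
ratio `s : t`. Hence minimizing `M_{s g} y + ‖y - x‖ ^ 2 / (2 * t)` over `y` amounts to minimizing
`g v + ‖v - x‖ ^ 2 / (2 * (s + t))` over `v` and then dividing the segment from the minimizer
to `x` in that ratio.
-/

section PseudoMetricSpace

variable {α : Type*} [PseudoMetricSpace α]

/-- `f` is a proximal operator of `φ`; as minimizers need not be unique, this is a relation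
between `f` and `φ` rather than a function of `φ`. -/
def IsProximalOperator (φ : α → ℝ) (f : α → α) : Prop :=
  ∀ x y, φ (f x) + dist (f x) x ^ 2 / 2 ≤ φ y + dist y x ^ 2 / 2

/-- The Moreau envelope `M_{s g}`. It takes the junk value `0` at a point where the infimum
is not finite. -/
noncomputable def moreauEnvelope (s : ℝ) (g : α → ℝ) (y : α) : ℝ :=
  ⨅ v, (g v + dist v y ^ 2 / (2 * s))

variable {s t : ℝ} {g : α → ℝ} {f : α → α}

theorem isProximalOperator_const_mul_iff (ht : 0 < t) :
    IsProximalOperator (fun v ↦ t * g v) f ↔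
      ∀ x y, g (f x) + dist (f x) x ^ 2 / (2 * t) ≤ g y + dist y x ^ 2 / (2 * t) := by
  have hscale (v x : α) :
      t * g v + dist v x ^ 2 / 2 = t * (g v + dist v x ^ 2 / (2 * t)) := by
    field_simp
  simp only [IsProximalOperator, hscale, mul_le_mul_iff_right₀ ht]

theorem dist_sq_div_add_le (hs : 0 < s) (ht : 0 < t) (v y x : α) :
    dist v x ^ 2 / (2 * (s + t)) ≤ dist v y ^ 2 / (2 * s) + dist y x ^ 2 / (2 * t) :=
  calc
    dist v x ^ 2 / (2 * (s + t)) ≤ (dist v y + dist y x) ^ 2 / (2 * s + 2 * t) := by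
      rw [mul_add]
      gcongr
      exact dist_triangle v y x
    _ ≤ dist v y ^ 2 / (2 * s) + dist y x ^ 2 / (2 * t) := by
      simpa using Finset.sq_sum_div_le_sum_sq_div Finset.univ ![dist v y, dist y x]
        (g := ![2 * s, 2 * t]) (by simp [hs, ht])

namespace IsProximalOperator

theorem le_add_dist_sq_div (hf : IsProximalOperator (fun v ↦ (s + t) * g v) f)
    (hs : 0 < s) (ht : 0 < t) (x y v : α) :
    g (f x) + dist (f x) x ^ 2 / (2 * (s + t)) ≤
      g v + dist v y ^ 2 / (2 * s) + dist y x ^ 2 / (2 * t) := by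
  have hmin := (isProximalOperator_const_mul_iff (add_pos hs ht)).1 hf x v
  linarith [dist_sq_div_add_le hs ht v y x]

theorem le_moreauEnvelope_add (hf : IsProximalOperator (fun v ↦ (s + t) * g v) f)
    (hs : 0 < s) (ht : 0 < t) (x y : α) :
    g (f x) + dist (f x) x ^ 2 / (2 * (s + t)) ≤
      moreauEnvelope s g y + dist y x ^ 2 / (2 * t) := by
  have : Nonempty α := ⟨x⟩
  rw [← sub_le_iff_le_add]
  exact le_ciInf fun v ↦ sub_le_iff_le_add.2 (hf.le_add_dist_sq_div hs ht x y v)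

theorem moreauEnvelope_le (hf : IsProximalOperator (fun v ↦ (s + t) * g v) f)
    (hs : 0 < s) (ht : 0 < t) (y v : α) :
    moreauEnvelope s g y ≤ g v + dist v y ^ 2 / (2 * s) := by
  refine ciInf_le ⟨g (f y) + dist (f y) y ^ 2 / (2 * (s + t)), ?_⟩ v
  rintro _ ⟨w, rfl⟩
  simpa using hf.le_add_dist_sq_div hs ht y y w

end IsProximalOperator

end PseudoMetricSpace

section NormedSpace

variable {E : Type*} [SeminormedAddCommGroup E] [NormedSpace ℝ E] {s t : ℝ}

theorem dist_sq_div_add_eq (hs : 0 < s) (ht : 0 < t) (v x : E) :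
    dist v ((s + t)⁻¹ • (t • v + s • x)) ^ 2 / (2 * s) +
        dist ((s + t)⁻¹ • (t • v + s • x)) x ^ 2 / (2 * t) =
      dist v x ^ 2 / (2 * (s + t)) := by
  have hleft : v - (s + t)⁻¹ • (t • v + s • x) = (s / (s + t)) • (v - x) := by
    match_scalars
    · field_simp
      ring
    · field_simp
  have hright : (s + t)⁻¹ • (t • v + s • x) - x = (t / (s + t)) • (v - x) := by
    match_scalars
    · field_simp
    · field_simp
      ring
  rw [dist_eq_norm, dist_eq_norm, dist_eq_norm, hleft, hright,
    norm_smul_of_nonneg (by positivity), norm_smul_of_nonneg (by positivity)]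
  field_simp

theorem leaky_prox_is_prox_of_moreau_envelope_general {g : E → ℝ} {f : E → E}
    (hs : 0 < s) (ht : 0 < t) (hf : IsProximalOperator (fun v ↦ (s + t) * g v) f) :
    IsProximalOperator (fun y ↦ t * moreauEnvelope s g y)
      (fun x ↦ (s + t)⁻¹ • (t • f x + s • x)) := by
  refine (isProximalOperator_const_mul_iff ht).2 fun x y ↦ ?_
  set p := (s + t)⁻¹ • (t • f x + s • x) with hp
  calc
    moreauEnvelope s g p + dist p x ^ 2 / (2 * t)
        ≤ g (f x) + dist (f x) p ^ 2 / (2 * s) + dist p x ^ 2 / (2 * t) := by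
      gcongr
      exact hf.moreauEnvelope_le hs ht p (f x)
    _ = g (f x) + dist (f x) x ^ 2 / (2 * (s + t)) := by
      rw [add_assoc, hp, dist_sq_div_add_eq hs ht]
    _ ≤ moreauEnvelope s g y + dist y x ^ 2 / (2 * t) := hf.le_moreauEnvelope_add hs ht x y

end NormedSpace

theorem leaky_prox_is_prox_of_moreau_envelope (lam : ℝ) (hlam : 0 < lam)
    (g : ℝ → ℝ) (hg : ConvexOn ℝ Set.univ g) (f : ℝ → ℝ)
    (hf : ∀ x y : ℝ,
      (lam + 1) * g (f x) + (f x - x) ^ 2 / 2 ≤ (lam + 1) * g y + (y - x) ^ 2 / 2) :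
    let M : ℝ → ℝ := fun y => ⨅ v : ℝ, (g v + (v - y) ^ 2 / (2 * lam))
    ∀ x y : ℝ,
      M ((f x + lam * x) / (lam + 1)) + ((f x + lam * x) / (lam + 1) - x) ^ 2 / 2 ≤
        M y + (y - x) ^ 2 / 2 := by
  simpa [IsProximalOperator, moreauEnvelope, Real.dist_eq, div_eq_inv_mul] using
    leaky_prox_is_prox_of_moreau_envelope_general (g := g) (f := f) hlam one_pos
      (by simpa [IsProximalOperator, Real.dist_eq] using hf)
end

section
/- Define φ : ℝ → ℝ by φ(y) = y·log(y) + (1−y)·log(1−y) − y²/2 (using the real logarithm), and the sigmoid σ(x) = 1/(1 + exp(−x)). Then for every x ∈ ℝ, σ(x) ∈ (0, 1), and σ(x) minimizes y ↦ φ(y) + ½(y − x)² over the open interval (0, 1): for every y ∈ (0, 1), φ(σ(x)) + (σ(x) − x)²/2 ≤ φ(y) + (y − x)²/2. -/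
/-!
Completing the square leaves `x ^ 2 / 2 - (x * y + H y)` as the objective, with `H` the binary
entropy. The convex conjugate of `-H` on `[0, 1]` is the softplus `x ↦ log (1 + exp x)`, and the
Fenchel–Young inequality between the two, which is Gibbs' inequality against the Bernoulli law of
parameter `sigmoid x`, is an equality at `y = sigmoid x`.
-/

open Real Set

theorem negMulLog_add_mul_log_le_sub {p q : ℝ} (hp : 0 ≤ p) (hq : 0 < q) :
    negMulLog p + p * log q ≤ q - p := by
  rcases hp.eq_or_lt with rfl | hp
  · simpa using hq.le
  calc negMulLog p + p * log q = p * log (q / p) := by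
        rw [log_div hq.ne' hp.ne', negMulLog]; ring
    _ ≤ p * (q / p - 1) := by gcongr; exact log_le_sub_one_of_pos (div_pos hq hp)
    _ = q - p := by field_simp

theorem binEntropy_le_neg_mul_log_add {p q : ℝ} (hp : p ∈ Icc 0 1) (hq : q ∈ Ioo 0 1) :
    binEntropy p ≤ -(p * log q + (1 - p) * log (1 - q)) := by
  have h_success := negMulLog_add_mul_log_le_sub hp.1 hq.1
  have h_failure := negMulLog_add_mul_log_le_sub (sub_nonneg.2 hp.2) (sub_pos.2 hq.2)
  rw [binEntropy_eq_negMulLog_add_negMulLog_one_sub]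
  linarith

theorem sigmoid_mem_Ioo (x : ℝ) : sigmoid x ∈ Ioo 0 1 :=
  ⟨sigmoid_pos x, sigmoid_lt_one x⟩

theorem log_one_sub_sigmoid (x : ℝ) : log (1 - sigmoid x) = -log (1 + exp x) := by
  rw [← sigmoid_neg, sigmoid_def, neg_neg, log_inv]

theorem log_sigmoid (x : ℝ) : log (sigmoid x) = x - log (1 + exp x) := by
  have h : log (sigmoid x) + -x = log (1 - sigmoid x) := by
    rw [← sigmoid_neg, ← sigmoid_mul_rexp_neg, log_mul (sigmoid_pos x).ne' (exp_ne_zero _),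
      log_exp]
  linarith [log_one_sub_sigmoid x]

theorem mul_add_binEntropy_le_log_one_add_exp (x : ℝ) {p : ℝ} (hp : p ∈ Icc 0 1) :
    x * p + binEntropy p ≤ log (1 + exp x) := by
  have gibbs := binEntropy_le_neg_mul_log_add hp (sigmoid_mem_Ioo x)
  rw [log_sigmoid, log_one_sub_sigmoid] at gibbs
  linarith

theorem mul_sigmoid_add_binEntropy_sigmoid (x : ℝ) :
    x * sigmoid x + binEntropy (sigmoid x) = log (1 + exp x) := by
  rw [binEntropy, log_inv, log_inv, log_sigmoid, log_one_sub_sigmoid]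
  ring

theorem isMaxOn_mul_add_binEntropy_sigmoid (x : ℝ) :
    IsMaxOn (fun p ↦ x * p + binEntropy p) (Icc 0 1) (sigmoid x) := fun _ hp ↦
  (mul_add_binEntropy_le_log_one_add_exp x hp).trans_eq (mul_sigmoid_add_binEntropy_sigmoid x).symm

theorem sigmoid_is_prox (x : ℝ) :
    let φ : ℝ → ℝ := fun y => y * Real.log y + (1 - y) * Real.log (1 - y) - y ^ 2 / 2
    let σ : ℝ → ℝ := fun x => 1 / (1 + Real.exp (-x))
    σ x ∈ Set.Ioo (0 : ℝ) 1 ∧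
      ∀ y ∈ Set.Ioo (0 : ℝ) 1,
        φ (σ x) + (σ x - x) ^ 2 / 2 ≤ φ y + (y - x) ^ 2 / 2 := by
  intro φ σ
  have hσ : σ x = sigmoid x := one_div _
  have objective_eq (y : ℝ) : φ y + (y - x) ^ 2 / 2 = x ^ 2 / 2 - (x * y + binEntropy y) := by
    simp only [φ, binEntropy, log_inv]
    ring
  rw [hσ]
  refine ⟨sigmoid_mem_Ioo x, fun y hy ↦ ?_⟩
  rw [objective_eq, objective_eq]
  exact sub_le_sub_left (isMaxOn_mul_add_binEntropy_sigmoid x (Ioo_subset_Icc_self hy)) _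
end
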